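/- Let R be a Gorenstein local ring, c ≥ 1 an integer, and M, N finitely generated R-modules such that M satisfies (S_c), N satisfies (S_{c−1}), M ⊗_R N satisfies (S_c), and M_p is free for all primes p of height ≤ c − 1. Let M_0 = M and for i = 1,...,c let 0 → M_{i−1} → F_i → M_i → 0 be the successive pushforwards. Then Tor_i^R(M_c, N) = 0 for i = 1,...,c. -/

import Mathlib

open CategoryTheory

/-- The `i`-th Tor group of two modules over a commutative ring, as an object of `ModuleCat`. -/
noncomputable abbrev TorGrp (A : Type) [CommRing A] (i : ℕ)
    (M N : Type) [AddCommGroup M] [Module A M] [AddCommGroup N] [Module A N] :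
    ModuleCat.{0} A :=
  ((Tor (ModuleCat.{0} A) i).obj (ModuleCat.of A M)).obj (ModuleCat.of A N)

open scoped Classical in
/-- The depth of a module over a local ring (`⊤` for the zero module). -/
noncomputable def moduleDepth (R M : Type) [CommRing R] [IsLocalRing R]
    [AddCommGroup M] [Module R M] : ℕ∞ :=
  if Subsingleton M then ⊤
  else sSup {n : ℕ∞ | ∃ l : List R, (l.length : ℕ∞) = n ∧
    (∀ x ∈ l, x ∈ IsLocalRing.maximalIdeal R) ∧ RingTheory.Sequence.IsRegular M l}

/-- The minimal number of generators of a module. -/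
noncomputable def minGens (R M : Type*) [Ring R] [AddCommGroup M] [Module R M] : ℕ :=
  sInf {n : ℕ | ∃ s : Finset M, s.card = n ∧ Submodule.span R (s : Set M) = ⊤}

/-- A Gorenstein local ring: a Noetherian local ring of finite self-injective dimension. -/
def IsGorensteinLocal (R : Type) [CommRing R] [IsLocalRing R] : Prop :=
  IsNoetherianRing R ∧ ∃ n : ℕ, ∀ (X : ModuleCat.{0} R) (i : ℕ), n < i →
    Subsingleton (((Ext R (ModuleCat.{0} R) i).obj (Opposite.op X)).obj (ModuleCat.of R R))

/-- Serre's condition `(S_n)`:  `depth M_q ≥ min{n, dim R_q}` for all primes `q`. -/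
def SerreCond (R M : Type) [CommRing R] [AddCommGroup M] [Module R M] (n : ℕ) : Prop :=
  ∀ (q : Ideal R) [q.IsPrime],
    min ((n : WithBot ℕ∞)) (ringKrullDim (Localization.AtPrime q)) ≤
      (↑(moduleDepth (Localization.AtPrime q) (LocalizedModule q.primeCompl M)) : WithBot ℕ∞)


/-- Ext-characterisation of `depth ≥ n`. -/
def HasD (S A : Type) [CommRing S] [IsLocalRing S] [AddCommGroup A] [Module S A] (n : ℕ) : Prop :=
  ∀ i < n, Subsingleton (Abelian.Ext.{0} (ModuleCat.of S (IsLocalRing.ResidueField S))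
    (ModuleCat.of S A) i)

lemma supp_residueField (S : Type) [CommRing S] [IsLocalRing S] :
    Module.support S (IsLocalRing.ResidueField S) =
      PrimeSpectrum.zeroLocus (IsLocalRing.maximalIdeal S) := by
  have : Module.support S (S ⧸ IsLocalRing.maximalIdeal S) =
      PrimeSpectrum.zeroLocus (IsLocalRing.maximalIdeal S) := by
    rw [Module.support_eq_zeroLocus, Ideal.annihilator_quotient]
  exact this

lemma finite_residueField (S : Type) [CommRing S] [IsLocalRing S] :
    Module.Finite S (IsLocalRing.ResidueField S) :=
  inferInstanceAs (Module.Finite S (S ⧸ IsLocalRing.maximalIdeal S))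

lemma exists_reg_of_le_depth (S A : Type) [CommRing S] [IsLocalRing S]
    [AddCommGroup A] [Module S A] (hA : ¬ Subsingleton A) (n : ℕ) (h : (n : ℕ∞) ≤ moduleDepth S A) :
    ∃ l : List S, n ≤ l.length ∧ (∀ x ∈ l, x ∈ IsLocalRing.maximalIdeal S) ∧
      RingTheory.Sequence.IsRegular A l := by
  rw [moduleDepth, if_neg hA] at h
  rcases n with _ | n
  · have : Nontrivial A := not_subsingleton_iff_nontrivial.mp hA
    exact ⟨[], by simp, by simp, RingTheory.Sequence.IsRegular.nil _ _⟩
  · have h' : (n : ℕ∞) < sSup {n : ℕ∞ | ∃ l : List S, (l.length : ℕ∞) = n ∧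
      (∀ x ∈ l, x ∈ IsLocalRing.maximalIdeal S) ∧ RingTheory.Sequence.IsRegular A l} :=
      lt_of_lt_of_le (by exact_mod_cast Nat.lt_succ_self n) h
    obtain ⟨_, ⟨l, rfl, hl⟩, h2⟩ := lt_sSup_iff.mp h'
    exact ⟨l, by exact_mod_cast h2, hl⟩

lemma HasD_of_le_depth (S A : Type) [CommRing S] [IsLocalRing S] [IsNoetherianRing S]
    [AddCommGroup A] [Module S A] [Module.Finite S A] (n : ℕ) (h : (n : ℕ∞) ≤ moduleDepth S A) :
    HasD S A n := by
  intro i hi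
  by_cases hA : Subsingleton A
  · have h0 : ∀ x : Abelian.Ext.{0} (ModuleCat.of S (IsLocalRing.ResidueField S))
      (ModuleCat.of S A) i, x = 0 := by
      intro x
      have : 𝟙 (ModuleCat.of S A) = 0 := by
        ext a
        exact Subsingleton.elim (α := A) _ _
      rw [← Abelian.Ext.comp_mk₀_id x, this]
      simp
    exact ⟨fun a b => (h0 a).trans (h0 b).symm⟩
  · obtain ⟨l, hl, hm, hr⟩ := exists_reg_of_le_depth S A hA n h
    have : Nontrivial A := not_subsingleton_iff_nontrivial.mp hA
    have := finite_residueField S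
    refine ModuleCat.subsingleton_ext_of_exists_isRegular (IsLocalRing.maximalIdeal S)
      (ModuleCat.of S (IsLocalRing.ResidueField S)) (supp_residueField S).le (ModuleCat.of S A)
      ?_ l hm hr i (by omega)
    refine lt_top_iff_ne_top.mpr (Ne.symm ?_)
    exact Submodule.top_ne_ideal_smul_of_le_jacobson_annihilator
      (IsLocalRing.maximalIdeal_le_jacobson _)

lemma HasD.ses {S A B C : Type} [CommRing S] [IsLocalRing S]
    [AddCommGroup A] [Module S A] [AddCommGroup B] [Module S B] [AddCommGroup C] [Module S C]
    (f : A →ₗ[S] B) (g : B →ₗ[S] C) (hf : Function.Injective f) (hg : Function.Surjective g)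
    (hfg : Function.Exact f g) (n : ℕ) (hA : HasD S A (n + 1)) (hB : HasD S B n) : HasD S C n := by
  intro i hi
  have hS := ModuleCat.shortComplex_shortExact (ShortComplex.mk (ModuleCat.ofHom f)
    (ModuleCat.ofHom g) (by ext a; simpa using hfg.apply_apply_eq_zero a)) hfg hf hg
  have h1 := hA (i + 1) (by omega)
  have h2 := hB i hi
  have h0 : ∀ x : Abelian.Ext.{0} (ModuleCat.of S (IsLocalRing.ResidueField S))
    (ModuleCat.of S C) i, x = 0 := by
    intro x
    obtain ⟨y, rfl⟩ := Abelian.Ext.covariant_sequence_exact₃ _ hS x rfl (Subsingleton.elim _ _)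
    rw [Subsingleton.elim y 0]; simp
  exact ⟨fun a b => (h0 a).trans (h0 b).symm⟩

lemma HasD.sum {S A B : Type} [CommRing S] [IsLocalRing S]
    [AddCommGroup A] [Module S A] [AddCommGroup B] [Module S B] {ι : Type} [Fintype ι]
    (p : ι → A →ₗ[S] B) (q : ι → B →ₗ[S] A) (h : ∑ j, q j ∘ₗ p j = LinearMap.id)
    (n : ℕ) (hB : HasD S B n) : HasD S A n := by
  intro i hi
  have h2 := hB i hi
  have h0 : ∀ x : Abelian.Ext.{0} (ModuleCat.of S (IsLocalRing.ResidueField S))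
    (ModuleCat.of S A) i, x = 0 := by
    intro x
    have : 𝟙 (ModuleCat.of S A) = ∑ j, ModuleCat.ofHom (p j) ≫ ModuleCat.ofHom (q j) := by
      ext a
      simpa using (LinearMap.congr_fun h a).symm
    rw [← Abelian.Ext.comp_mk₀_id x, this, Abelian.Ext.mk₀_sum, Abelian.Ext.comp_sum]
    refine Finset.sum_eq_zero fun j _ => ?_
    rw [← Abelian.Ext.mk₀_comp_mk₀, ← Abelian.Ext.comp_assoc_of_second_deg_zero]
    rw [Subsingleton.elim (x.comp (Abelian.Ext.mk₀ (ModuleCat.ofHom (p j))) (add_zero i)) 0]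
    simp
  exact ⟨fun a b => (h0 a).trans (h0 b).symm⟩

lemma HasD.eq_zero {S A : Type} [CommRing S] [IsLocalRing S]
    [AddCommGroup A] [Module S A] (h : HasD S A 1) (x : A)
    (hx : ∀ y ∈ IsLocalRing.maximalIdeal S, y • x = 0) : x = 0 := by
  have h0 := h 0 (by omega)
  have h1 : Subsingleton (ModuleCat.of S (IsLocalRing.ResidueField S) ⟶ ModuleCat.of S A) :=
    Abelian.Ext.addEquiv₀.subsingleton_congr.mp h0
  have h2 : Subsingleton ((S ⧸ IsLocalRing.maximalIdeal S) →ₗ[S] A) :=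
    (ModuleCat.homAddEquiv (M := ModuleCat.of S (IsLocalRing.ResidueField S))
      (N := ModuleCat.of S A)).symm.subsingleton
  have h3 := Subsingleton.elim ((IsLocalRing.maximalIdeal S).liftQ
    (LinearMap.toSpanSingleton S A x) (fun y hy => by simpa using hx y hy)) 0
  have := LinearMap.congr_fun h3 (Submodule.Quotient.mk 1)
  rw [Submodule.liftQ_apply] at this
  simpa using this

lemma tor_iff (R : Type) [CommRing R] (i : ℕ) (A : Type) [AddCommGroup A] [Module R A]
    (N : Type) [AddCommGroup N] [Module R N] (P : ProjectiveResolution (ModuleCat.of R N)) :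
    Subsingleton (TorGrp R (i + 1) A N) ↔
    Function.Exact (LinearMap.lTensor A (P.complex.d (i + 2) (i + 1)).hom)
      (LinearMap.lTensor A (P.complex.d (i + 1) i).hom) := by
  have e := P.isoLeftDerivedObj ((MonoidalCategory.tensoringLeft (ModuleCat.{0} R)).obj
    (ModuleCat.of R A)) (i + 1)
  rw [← ModuleCat.isZero_iff_subsingleton]
  refine (Iso.isZero_iff e).trans ?_
  change Limits.IsZero (HomologicalComplex.homology _ _) ↔ _
  rw [← HomologicalComplex.exactAt_iff_isZero_homology,
    HomologicalComplex.exactAt_iff' _ (i + 2) (i + 1) i (by simp only [ChainComplex.prev]; rfl)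
      (by simp), ShortComplex.ShortExact.moduleCat_exact_iff_function_exact]
  rfl

/-- general diagram chase -/
lemma chase (R : Type) [CommRing R] {A B C P2 P1 P0 Q : Type}
    [AddCommGroup A] [Module R A] [AddCommGroup B] [Module R B] [AddCommGroup C] [Module R C]
    [AddCommGroup P2] [Module R P2] [AddCommGroup P1] [Module R P1] [AddCommGroup P0] [Module R P0]
    [AddCommGroup Q] [Module R Q]
    (f : A →ₗ[R] B) (g : B →ₗ[R] C) (hg : Function.Surjective g) (hfg : Function.Exact f g)
    (d2 : P2 →ₗ[R] P1) (d1 : P1 →ₗ[R] P0) (d0 : P0 →ₗ[R] Q)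
    (h21 : d1 ∘ₗ d2 = 0) (h10 : d0 ∘ₗ d1 = 0)
    (hB : Function.Exact (LinearMap.lTensor B d2) (LinearMap.lTensor B d1))
    (hA : Function.Exact (LinearMap.lTensor A d1) (LinearMap.lTensor A d0))
    (hfQ : Function.Injective (LinearMap.rTensor Q f)) :
    Function.Exact (LinearMap.lTensor C d2) (LinearMap.lTensor C d1) := by
  have comm : ∀ {X Y U V : Type} [AddCommGroup X] [Module R X] [AddCommGroup Y] [Module R Y]
    [AddCommGroup U] [Module R U] [AddCommGroup V] [Module R V] (k : X →ₗ[R] Y) (d : U →ₗ[R] V)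
    (z : TensorProduct R X U),
      LinearMap.lTensor Y d (LinearMap.rTensor U k z) =
      LinearMap.rTensor V k (LinearMap.lTensor X d z) := by
    intros
    rw [← LinearMap.comp_apply, ← LinearMap.comp_apply, LinearMap.lTensor_comp_rTensor,
      LinearMap.rTensor_comp_lTensor]
  intro z
  constructor
  · intro hz
    obtain ⟨b, rfl⟩ := LinearMap.rTensor_surjective P1 hg z
    rw [comm] at hz
    obtain ⟨a, ha⟩ := (rTensor_exact P0 hfg hg _).mp hz
    have h1 : LinearMap.lTensor A d0 a = 0 := by
      apply hfQ
      rw [← comm, ha, ← LinearMap.comp_apply, ← LinearMap.lTensor_comp, h10]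
      simp
    obtain ⟨a', rfl⟩ := (hA _).mp h1
    have h2 : LinearMap.lTensor B d1 (b - LinearMap.rTensor P1 f a') = 0 := by
      rw [map_sub, comm, ha, sub_self]
    obtain ⟨b'', hb⟩ := (hB _).mp h2
    refine ⟨LinearMap.rTensor P2 g b'', ?_⟩
    rw [comm, hb, map_sub, (rTensor_exact P1 hfg hg).apply_apply_eq_zero, sub_zero]
  · rintro ⟨w, rfl⟩
    rw [← LinearMap.comp_apply, ← LinearMap.lTensor_comp, h21]
    simp

lemma res_exact (R : Type) [CommRing R] (N : Type) [AddCommGroup N] [Module R N]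
    (P : ProjectiveResolution (ModuleCat.of R N)) (i : ℕ) :
    Function.Exact (P.complex.d (i + 2) (i + 1)).hom (P.complex.d (i + 1) i).hom :=
  (ShortComplex.ShortExact.moduleCat_exact_iff_function_exact _).mp (P.exact_succ i)

lemma res_flat (R : Type) [CommRing R] (N : Type) [AddCommGroup N] [Module R N]
    (P : ProjectiveResolution (ModuleCat.of R N)) (i : ℕ) : Module.Flat R (P.complex.X i) := by
  have := P.projective i
  have : Module.Projective R (P.complex.X i) := (IsProjective.iff_projective _).mpr this
  infer_instance

lemma tor_succ (R : Type) [CommRing R] (i : ℕ) {A B C : Type}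
    [AddCommGroup A] [Module R A] [AddCommGroup B] [Module R B] [AddCommGroup C] [Module R C]
    [Module.Flat R B]
    (f : A →ₗ[R] B) (g : B →ₗ[R] C) (hf : Function.Injective f)
    (hg : Function.Surjective g) (hfg : Function.Exact f g)
    (N : Type) [AddCommGroup N] [Module R N] (h : Subsingleton (TorGrp R (i + 1) A N)) :
    Subsingleton (TorGrp R (i + 2) C N) := by
  let P := projectiveResolution (ModuleCat.of R N)
  rw [tor_iff R _ _ _ P] at h ⊢
  have h1 := res_flat R N P i
  exact chase R f g hg hfg _ _ _ (res_exact R N P (i + 1)).linearMap_comp_eq_zero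
    (res_exact R N P i).linearMap_comp_eq_zero
    (Module.Flat.lTensor_exact _ (res_exact R N P (i + 1))) h
    (Module.Flat.rTensor_preserves_injective_linearMap f hf)

lemma tor_one (R : Type) [CommRing R] {A B C : Type}
    [AddCommGroup A] [Module R A] [AddCommGroup B] [Module R B] [AddCommGroup C] [Module R C]
    [Module.Flat R B]
    (f : A →ₗ[R] B) (g : B →ₗ[R] C) 
    (hg : Function.Surjective g) (hfg : Function.Exact f g)
    (N : Type) [AddCommGroup N] [Module R N] (h : Function.Injective (LinearMap.rTensor N f)) :
    Subsingleton (TorGrp R 1 C N) := by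
  let P := projectiveResolution (ModuleCat.of R N)
  rw [tor_iff R 0 _ _ P]
  have hex : Function.Exact (P.complex.d 1 0).hom (P.π.f 0).hom := by
    refine (ShortComplex.ShortExact.moduleCat_exact_iff_function_exact _).mp P.exact₀
  have hs : Function.Surjective (P.π.f 0).hom := by
    have : Epi (P.π.f 0) := inferInstance
    exact (ModuleCat.epi_iff_surjective _).mp this
  refine chase R (Q := N) f g hg hfg _ _ (P.π.f 0).hom (res_exact R N P 0).linearMap_comp_eq_zero
    hex.linearMap_comp_eq_zero
    (Module.Flat.lTensor_exact _ (res_exact R N P 0)) (lTensor_exact A hex hs) h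

/-- `M` is projective in a neighbourhood of `q`, witnessed over `R`. -/
def LocProj (R : Type) [CommRing R] (q : Ideal R) (M : Type) [AddCommGroup M] [Module R M] : Prop :=
  ∃ s : R, s ∉ q ∧ ∃ (n : ℕ) (a : M →ₗ[R] (Fin n → R)) (b : (Fin n → R) →ₗ[R] M),
    b ∘ₗ a = s • LinearMap.id

lemma LocProj.of_free (R : Type) [CommRing R] [IsNoetherianRing R] (q : Ideal R) [q.IsPrime]
    (M : Type) [AddCommGroup M] [Module R M] [Module.Finite R M]
    (h : Module.Free (Localization.AtPrime q) (LocalizedModule q.primeCompl M)) :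
    LocProj R q M := by
  have hfp : Module.FinitePresentation R M := Module.finitePresentation_of_finite R M
  have hfin : Module.Finite (Localization.AtPrime q) (LocalizedModule q.primeCompl M) :=
    inferInstance
  let e := (Module.finBasis (Localization.AtPrime q) (LocalizedModule q.primeCompl M)).equivFun
  let n := Module.finrank (Localization.AtPrime q) (LocalizedModule q.primeCompl M)
  let F : (Fin n → R) →ₗ[R] (Fin n → Localization.AtPrime q) :=
    LinearMap.pi fun i => (Algebra.linearMap R (Localization.AtPrime q)) ∘ₗ LinearMap.proj i
  have : IsLocalizedModule q.primeCompl F :=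
    IsLocalizedModule.pi q.primeCompl (fun _ => Algebra.linearMap R (Localization.AtPrime q))
  let mk := LocalizedModule.mkLinearMap q.primeCompl M
  let e' : LocalizedModule q.primeCompl M ≃ₗ[R] (Fin n → Localization.AtPrime q) :=
    e.restrictScalars R
  obtain ⟨a, s, ha⟩ := Module.FinitePresentation.exists_lift_of_isLocalizedModule q.primeCompl F
    (e'.toLinearMap ∘ₗ mk)
  obtain ⟨b, t, hb⟩ := Module.FinitePresentation.exists_lift_of_isLocalizedModule q.primeCompl mk
    (e'.symm.toLinearMap ∘ₗ F)
  have hab : mk ∘ₗ (b ∘ₗ a) = mk ∘ₗ ((t * s) • LinearMap.id) := by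
    ext x
    have h1 := LinearMap.congr_fun hb (a x)
    have h2 := LinearMap.congr_fun ha x
    simp only [LinearMap.comp_apply, LinearMap.smul_apply, LinearEquiv.coe_coe] at h1 h2
    simp only [LinearMap.comp_apply, LinearMap.smul_apply, LinearMap.id_apply]
    rw [h1, h2]
    simp only [Submonoid.smul_def, map_smul, LinearEquiv.symm_apply_apply, mul_smul]
  obtain ⟨u, hu⟩ := Module.Finite.exists_smul_of_comp_eq_of_isLocalizedModule q.primeCompl mk _ _ hab
  refine ⟨(u * (t * s) : q.primeCompl), (u * (t * s)).2, n, a, (u : R) • b, ?_⟩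
  rw [LinearMap.smul_comp]
  simp only [Submonoid.smul_def] at hu
  rw [hu, smul_smul]
  rfl

section push
variable {R : Type} [CommRing R] {A C : Type} [AddCommGroup A] [Module R A]
  [AddCommGroup C] [Module R C] {l : ℕ}

lemma push_retract (π : (Fin l → R) →ₗ[R] Module.Dual R A) (hπ : Function.Surjective π)
    (ι : A →ₗ[R] (Fin l → R)) (hι : ∀ m j, ι m j = π (Pi.single j 1) m)
    (q : Ideal R) (h : LocProj R q A) :
    ∃ s : R, s ∉ q ∧ ∃ r : (Fin l → R) →ₗ[R] A, r ∘ₗ ι = s • LinearMap.id := by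
  obtain ⟨s, hs, n, a, b, hab⟩ := h
  choose v hv using fun i : Fin n => hπ (LinearMap.proj i ∘ₗ a)
  let f : (Fin l → R) →ₗ[R] (Fin n → R) :=
    LinearMap.pi fun i => ∑ j, v i j • LinearMap.proj j
  have hf : f ∘ₗ ι = a := by
    ext x i
    have := LinearMap.congr_fun (hv i) x
    rw [pi_eq_sum_univ' (v i)] at this
    simp only [map_sum, map_smul, LinearMap.sum_apply, LinearMap.smul_apply] at this
    simpa [f, hι] using this
  exact ⟨s, hs, b ∘ₗ f, by rw [LinearMap.comp_assoc, hf, hab]⟩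

lemma push_section (ι : A →ₗ[R] (Fin l → R)) (pr : (Fin l → R) →ₗ[R] C)
    (hsurj : Function.Surjective pr) (hex : Function.Exact ι pr)
    (s : R) (r : (Fin l → R) →ₗ[R] A) (hr : r ∘ₗ ι = s • LinearMap.id) :
    ∃ σ : C →ₗ[R] (Fin l → R), pr ∘ₗ σ = s • LinearMap.id := by
  let g : (Fin l → R) →ₗ[R] (Fin l → R) := s • LinearMap.id - ι ∘ₗ r
  have hg : LinearMap.ker pr ≤ LinearMap.ker g := by
    intro x hx
    obtain ⟨y, rfl⟩ := (hex x).mp hx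
    have := LinearMap.congr_fun hr y
    simp only [LinearMap.comp_apply, LinearMap.smul_apply, LinearMap.id_apply] at this
    simp [g, this]
  let e := pr.quotKerEquivOfSurjective hsurj
  refine ⟨(LinearMap.ker pr).liftQ g hg ∘ₗ e.symm.toLinearMap, ?_⟩
  ext c
  obtain ⟨x, rfl⟩ := hsurj c
  have : e.symm (pr x) = Submodule.Quotient.mk x := by
    rw [LinearEquiv.symm_apply_eq]; rfl
  simp [this, g, hex.apply_apply_eq_zero]
end push

abbrev LHasD (R : Type) [CommRing R] (q : Ideal R) [q.IsPrime] (A : Type) [AddCommGroup A]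
    [Module R A] (k : ℕ) : Prop :=
  HasD (Localization.AtPrime q) (LocalizedModule q.primeCompl A) k

lemma LHasD.sum {R : Type} [CommRing R] (q : Ideal R) [q.IsPrime] {A B : Type}
    [AddCommGroup A] [Module R A] [AddCommGroup B] [Module R B] {ι : Type} [Fintype ι]
    (p : ι → A →ₗ[R] B) (p' : ι → B →ₗ[R] A) (s : R) (hs : s ∉ q)
    (h : ∑ j, p' j ∘ₗ p j = s • LinearMap.id)
    (n : ℕ) (hB : LHasD R q B n) : LHasD R q A n := by
  let L := Localization.AtPrime q
  let u : L := IsLocalization.mk' L 1 (⟨s, hs⟩ : q.primeCompl)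
  have hu : u * algebraMap R L s = 1 := by
    have := IsLocalization.mk'_spec L 1 (⟨s, hs⟩ : q.primeCompl)
    simpa using this
  refine HasD.sum (fun j => LocalizedModule.map q.primeCompl (p j))
    (fun j => u • LocalizedModule.map q.primeCompl (p' j)) ?_ n hB
  have h1 : ∑ j, LocalizedModule.map q.primeCompl (p' j) ∘ₗ LocalizedModule.map q.primeCompl (p j)
      = algebraMap R L s • LinearMap.id := by
    ext x
    induction x using LocalizedModule.induction_on with
    | h m t =>
      have := LinearMap.congr_fun h m
      simp only [LinearMap.sum_apply, LinearMap.comp_apply, LinearMap.smul_apply,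
        LinearMap.id_apply] at this ⊢
      simp only [LocalizedModule.map_mk]
      rw [algebraMap_smul, LocalizedModule.smul'_mk, ← this]
      have hmk : ∀ x : A, LocalizedModule.mk x t = (Localization.mk 1 t : Localization q.primeCompl) •
          LocalizedModule.mkLinearMap q.primeCompl A x := by
        intro x
        rw [LocalizedModule.mkLinearMap_apply, LocalizedModule.mk_smul_mk]; simp
      simp only [hmk, map_sum, Finset.smul_sum]
  simp only [LinearMap.smul_comp]
  rw [← Finset.smul_sum, h1, smul_smul, hu, one_smul]

lemma LHasD.ses {R A B C : Type} [CommRing R] (q : Ideal R) [q.IsPrime]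
    [AddCommGroup A] [Module R A] [AddCommGroup B] [Module R B] [AddCommGroup C] [Module R C]
    (f : A →ₗ[R] B) (g : B →ₗ[R] C) (hf : Function.Injective f) (hg : Function.Surjective g)
    (hfg : Function.Exact f g) (n : ℕ) (hA : LHasD R q A (n + 1)) (hB : LHasD R q B n) :
    LHasD R q C n :=
  HasD.ses (LocalizedModule.map q.primeCompl f) (LocalizedModule.map q.primeCompl g)
    (LocalizedModule.map_injective _ f hf) (LocalizedModule.map_surjective _ g hg)
    (LocalizedModule.map_exact _ f g hfg) n hA hB

lemma LHasD.of_serre {R : Type} [CommRing R] [IsNoetherianRing R] (A : Type) [AddCommGroup A]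
    [Module R A] [Module.Finite R A] (c : ℕ) (h : SerreCond R A c) (q : Ideal R) [q.IsPrime]
    (k : ℕ) (hk : k ≤ c) (hq : (k : WithBot ℕ∞) ≤ ringKrullDim (Localization.AtPrime q)) :
    LHasD R q A k := by
  refine HasD_of_le_depth _ _ _ ?_
  have h1 : (k : WithBot ℕ∞) ≤ (c : WithBot ℕ∞) := by exact_mod_cast hk
  have := (le_min h1 hq).trans (h q)
  exact_mod_cast this

lemma LHasD.eq_zero {R : Type} [CommRing R] (A : Type) [AddCommGroup A]
    [Module R A] (q : Ideal R) [q.IsPrime] (h : LHasD R q A 1) (x : A)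
    (hx : ∀ y ∈ q, y • x = 0) : ∃ s ∉ q, s • x = 0 := by
  have h0 := HasD.eq_zero h (LocalizedModule.mkLinearMap q.primeCompl A x) (by
    intro y hy
    obtain ⟨r, t, rfl⟩ := IsLocalization.exists_mk'_eq q.primeCompl y
    rw [IsLocalization.AtPrime.mk'_mem_maximal_iff (Localization.AtPrime q) q] at hy
    rw [LocalizedModule.mkLinearMap_apply, ← Localization.mk_eq_mk',
      LocalizedModule.mk_smul_mk, hx r hy]
    simp)
  rw [← map_zero (LocalizedModule.mkLinearMap q.primeCompl A),
    IsLocalizedModule.eq_iff_exists q.primeCompl] at h0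
  obtain ⟨s, hs⟩ := h0
  exact ⟨s, s.2, by simpa [Submonoid.smul_def] using hs⟩

lemma succ_le_of_lt_wb (n : ℕ) (d : WithBot ℕ∞) (h : (n : WithBot ℕ∞) < d) :
    ((n + 1 : ℕ) : WithBot ℕ∞) ≤ d := by
  induction d using WithBot.recBotCoe with
  | bot => exact absurd h not_lt_bot
  | coe a =>
    have h' : (n : ℕ∞) < a := by exact_mod_cast h
    have := Order.add_one_le_of_lt h'
    exact_mod_cast this

lemma step_inj {R : Type} [CommRing R] [IsNoetherianRing R] {A N : Type} [AddCommGroup A]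
    [Module R A] [AddCommGroup N] [Module R N] {l : ℕ}
    (ι : A →ₗ[R] (Fin l → R))
    (hr : ∀ (q : Ideal R) [q.IsPrime], ringKrullDim (Localization.AtPrime q) ≤ 0 →
      ∃ s : R, s ∉ q ∧ ∃ r : (Fin l → R) →ₗ[R] A, r ∘ₗ ι = s • LinearMap.id)
    (hD : ∀ (q : Ideal R) [q.IsPrime],
      ((1 : ℕ) : WithBot ℕ∞) ≤ ringKrullDim (Localization.AtPrime q) →
        LHasD R q (TensorProduct R A N) 1) :
    Function.Injective (LinearMap.rTensor N ι) := by
  rw [← LinearMap.ker_eq_bot]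
  by_contra hne
  have : Nontrivial (LinearMap.ker (LinearMap.rTensor N ι)) :=
    Submodule.nontrivial_iff_ne_bot.mpr hne
  obtain ⟨q, hq⟩ := associatedPrimes.nonempty R (LinearMap.ker (LinearMap.rTensor N ι))
  obtain ⟨hqp, ⟨x, hxk⟩, hx⟩ := (isAssociatedPrime_iff.mp hq : _)
  have hmem : ∀ y : R, y ∈ q ↔ y • x = 0 := by
    intro y
    rw [hx]
    simp [Submodule.mem_colon_singleton]
  rcases le_or_gt (ringKrullDim (Localization.AtPrime q)) 0 with h0 | h0
  · obtain ⟨s, hs, r, hr⟩ := hr q h0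
    apply hs
    rw [hmem]
    have h1 : LinearMap.rTensor N r (LinearMap.rTensor N ι x) = s • x := by
      rw [← LinearMap.comp_apply, ← LinearMap.rTensor_comp, hr]; simp
    rw [← h1, LinearMap.mem_ker.mp hxk, map_zero]
  · obtain ⟨s, hs, h⟩ := LHasD.eq_zero _ q (hD q (succ_le_of_lt_wb 0 _ (by exact_mod_cast h0))) x
      (fun y hy => (hmem y).mp hy)
    exact hs ((hmem s).mpr h)

lemma tensor_LHasD {R : Type} [CommRing R] {C N : Type} [AddCommGroup C]
    [Module R C] [AddCommGroup N] [Module R N] {l : ℕ} (q : Ideal R) [q.IsPrime]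
    (s : R) (hs : s ∉ q) (σ : C →ₗ[R] (Fin l → R)) (pr : (Fin l → R) →ₗ[R] C)
    (h : pr ∘ₗ σ = s • LinearMap.id) (k : ℕ) (hN : LHasD R q N k) :
    LHasD R q (TensorProduct R C N) k := by
  refine LHasD.sum q
    (fun j : Fin l => (TensorProduct.lid R N).toLinearMap ∘ₗ
      LinearMap.rTensor N (LinearMap.proj j ∘ₗ σ))
    (fun j => LinearMap.rTensor N (pr ∘ₗ LinearMap.single R (fun _ => R) j) ∘ₗ
      (TensorProduct.lid R N).symm.toLinearMap) s hs ?_ k hN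
  have h1 : ∑ j : Fin l, (pr ∘ₗ LinearMap.single R (fun _ => R) j) ∘ₗ (LinearMap.proj j ∘ₗ σ) =
      s • LinearMap.id := by
    rw [← h]
    ext x
    simp only [LinearMap.sum_apply, LinearMap.comp_apply, LinearMap.proj_apply,
      LinearMap.coe_single, ← map_sum, Finset.univ_sum_single]
  calc _ = ∑ j : Fin l, LinearMap.rTensor N
        ((pr ∘ₗ LinearMap.single R (fun _ => R) j) ∘ₗ (LinearMap.proj j ∘ₗ σ)) := by
        refine Finset.sum_congr rfl fun j _ => ?_
        rw [LinearMap.rTensor_comp]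
        ext x y
        simp only [LinearMap.coe_comp, Function.comp_apply, LinearEquiv.coe_coe, TensorProduct.AlgebraTensorModule.curry_apply, TensorProduct.curry_apply, LinearMap.coe_restrictScalars, LinearMap.restrictScalars_self, LinearMap.rTensor_tmul, TensorProduct.lid_tmul, map_smul, TensorProduct.lid_symm_apply, LinearMap.proj_apply, LinearMap.coe_single]
        rw [TensorProduct.smul_tmul', ← map_smul, ← Pi.single_smul, smul_eq_mul, mul_one]
    _ = LinearMap.rTensor N (s • LinearMap.id) := by
        rw [← h1]
        exact (map_sum (LinearMap.rTensorHom N) _ _).symm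
    _ = _ := by rw [LinearMap.rTensor_smul, LinearMap.rTensor_id]

/-- Let `R` be Gorenstein local, `c ≥ 1`, and `M, N` finitely generated `R`-modules with `M`
satisfying `(S_c)`, `N` satisfying `(S_{c−1})`, `M ⊗_R N` satisfying `(S_c)`, and `M_p` free
for all primes of height `≤ c − 1`.  If `M_0 = M` and `0 → M_{i−1} → F_i → M_i → 0`
(`i = 1,…,c`) are the successive pushforwards, then `Tor_i^R(M_c, N) = 0` for `i = 1,…,c`. -/
theorem stmt18 (R : Type) [CommRing R] [IsLocalRing R] (hGor : IsGorensteinLocal R)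
    (c : ℕ) (hc : 1 ≤ c)
    (M N : Type) [AddCommGroup M] [Module R M] [Module.Finite R M]
    [AddCommGroup N] [Module R N] [Module.Finite R N]
    (hSM : SerreCond R M c) (hSN : SerreCond R N (c - 1))
    (hSMN : SerreCond R (TensorProduct R M N) c)
    (hfree : ∀ (P : Ideal R) [P.IsPrime],
      ringKrullDim (Localization.AtPrime P) ≤ ((c - 1 : ℕ) : WithBot ℕ∞) →
      Module.Free (Localization.AtPrime P) (LocalizedModule P.primeCompl M))
    -- the sequence of successive pushforwards `M_0 = M, M_1, …, M_c`
    (Mseq : Fin (c + 1) → Type)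
    [∀ i, AddCommGroup (Mseq i)] [∀ i, Module R (Mseq i)] [∀ i, Module.Finite R (Mseq i)]
    (e₀ : Mseq 0 ≃ₗ[R] M)
    (lam : Fin c → ℕ)
    (π : ∀ i : Fin c, (Fin (lam i) → R) →ₗ[R] Module.Dual R (Mseq i.castSucc))
    (hπ : ∀ i, Function.Surjective (π i))
    (hlam : ∀ i, lam i = minGens R (Module.Dual R (Mseq i.castSucc)))
    (ι : ∀ i : Fin c, Mseq i.castSucc →ₗ[R] (Fin (lam i) → R))
    (pr : ∀ i : Fin c, (Fin (lam i) → R) →ₗ[R] Mseq i.succ)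
    (hι : ∀ (i : Fin c) (m : Mseq i.castSucc) (j : Fin (lam i)),
      ι i m j = π i (Pi.single j 1) m)
    (hinj : ∀ i, Function.Injective (ι i))
    (hsurj : ∀ i, Function.Surjective (pr i))
    (hexact : ∀ i, Function.Exact (ι i) (pr i)) :
    ∀ i : ℕ, 1 ≤ i → i ≤ c → Subsingleton (TorGrp R i (Mseq (Fin.last c)) N) := by
  have hN : IsNoetherianRing R := hGor.1
  have hc0 : ∀ q : Ideal R, ∀ [q.IsPrime], ringKrullDim (Localization.AtPrime q) ≤ 0 →
      ringKrullDim (Localization.AtPrime q) ≤ ((c - 1 : ℕ) : WithBot ℕ∞) := by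
    intro q _ h
    exact h.trans (by exact_mod_cast Nat.zero_le _)
  -- local projectivity
  have hLP : ∀ j : Fin (c + 1), ∀ (q : Ideal R) [q.IsPrime],
      ringKrullDim (Localization.AtPrime q) ≤ ((c - 1 : ℕ) : WithBot ℕ∞) →
      LocProj R q (Mseq j) := by
    intro j
    induction j using Fin.induction with
    | zero =>
      intro q _ hq
      obtain ⟨s, hs, n, a, b, hab⟩ := LocProj.of_free R q M (hfree q hq)
      refine ⟨s, hs, n, a ∘ₗ e₀.toLinearMap, e₀.symm.toLinearMap ∘ₗ b, ?_⟩
      ext x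
      have := LinearMap.congr_fun hab (e₀ x)
      simp only [LinearMap.comp_apply, LinearMap.smul_apply, LinearMap.id_apply] at this
      simp [this]
    | succ j ih =>
      intro q _ hq
      obtain ⟨s, hs, r, hr⟩ := push_retract (π j) (hπ j) (ι j) (hι j) q (ih q hq)
      obtain ⟨σ, hσ⟩ := push_section (ι j) (pr j) (hsurj j) (hexact j) s r hr
      exact ⟨s, hs, lam j, σ, pr j, hσ⟩
  -- one step: injectivity
  have hInj : ∀ j : Fin c, (∀ (q : Ideal R) [q.IsPrime] (k : ℕ), k + j.val ≤ c →
      (k : WithBot ℕ∞) ≤ ringKrullDim (Localization.AtPrime q) →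
      LHasD R q (TensorProduct R (Mseq j.castSucc) N) k) →
      Function.Injective (LinearMap.rTensor N (ι j)) := by
    intro j hj
    refine step_inj (ι j) (fun q _ hq => ?_) (fun q _ hq => hj q 1 (by omega) hq)
    exact push_retract (π j) (hπ j) (ι j) (hι j) q (hLP _ q (hc0 q hq))
  have hD : ∀ j : Fin (c + 1), ∀ (q : Ideal R) [q.IsPrime] (k : ℕ), k + j.val ≤ c →
      (k : WithBot ℕ∞) ≤ ringKrullDim (Localization.AtPrime q) →
      LHasD R q (TensorProduct R (Mseq j) N) k := by
    intro j
    induction j using Fin.induction with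
    | zero =>
      intro q _ k hk hq
      have h1 := LHasD.of_serre _ c hSMN q k (by simpa using hk) hq
      refine LHasD.sum (ι := Unit) q (fun _ => LinearMap.rTensor N e₀.toLinearMap)
        (fun _ => LinearMap.rTensor N e₀.symm.toLinearMap) 1
        (fun h => (Ideal.IsPrime.ne_top ‹_›) ((Ideal.eq_top_iff_one q).mpr h)) ?_ k h1
      ext x y
      simp
    | succ j ih =>
      intro q _ k hk hq
      have hk' : k + j.val + 1 ≤ c := by simpa [add_assoc] using hk
      have hNq : LHasD R q N k := LHasD.of_serre N (c - 1) hSN q k (by omega) hq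
      have hF : LHasD R q (TensorProduct R (Fin (lam j) → R) N) k :=
        tensor_LHasD q 1
          (fun h => (Ideal.IsPrime.ne_top ‹_›) ((Ideal.eq_top_iff_one q).mpr h))
          LinearMap.id LinearMap.id (by simp) k hNq
      rcases le_or_gt (ringKrullDim (Localization.AtPrime q)) ((c - 1 : ℕ) : WithBot ℕ∞)
        with h0 | h0
      · obtain ⟨s, hs, n, a, b, hab⟩ := hLP j.succ q h0
        exact tensor_LHasD q s hs a b hab k hNq
      · refine LHasD.ses q (LinearMap.rTensor N (ι j)) (LinearMap.rTensor N (pr j)) (hInj j ih)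
          (LinearMap.rTensor_surjective N (hsurj j)) (rTensor_exact N (hexact j) (hsurj j)) k
          (ih q (k + 1) (by simp; omega) ?_) hF
        have h1 := succ_le_of_lt_wb _ _ h0
        refine le_trans ?_ h1
        have : k + 1 ≤ c - 1 + 1 := by omega
        exact_mod_cast this
  have hTor : ∀ j : Fin (c + 1), ∀ i : ℕ, i + 1 ≤ j.val →
      Subsingleton (TorGrp R (i + 1) (Mseq j) N) := by
    intro j
    induction j using Fin.induction with
    | zero => intro i hi; simp at hi
    | succ j ih =>
      intro i hi
      rcases i with _ | i
      · exact tor_one R (ι j) (pr j) (hsurj j) (hexact j) N (hInj j (hD j.castSucc))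
      · exact tor_succ R i (ι j) (pr j) (hinj j) (hsurj j) (hexact j) N
          (ih i (by simpa using hi))
  intro i h1 h2
  obtain ⟨i, rfl⟩ := Nat.exists_eq_add_of_le' h1
  exact hTor (Fin.last c) i (by simpa using h2)
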